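/- arXiv:math/9908137 — 4 statements merged into one kernel-verified Lean document; each statement's English description precedes it below -/
import Mathlib

section
/- Let $(G_k)_{k\ge 1}$ be an increasing chain of groups with union $G_\infty = \bigcup_k G_k$. Suppose for each $k$ a continuous irreducible unitary representation $(R_k,\mathcal H_k)$ of $G_k$ on a complex Hilbert space $\mathcal H_k$ is given, together with injective continuous linear embeddings $i_{k+1}^k\colon \mathcal H_k\to\mathcal H_{k+1}$ satisfying $i_{k+1}^k\circ R_k(g)=R_{k+1}(g)\circ i_{k+1}^k$ for all $g\in G_k$. Let $\mathcal H_\infty$ be the Hilbert-space completion of the inductive limit $\bigcup_k \mathcal H_k$ and let $R_\infty$ be the unique continuous unitary representation of $G_\infty$ on $\mathcal H_\infty$ with $R_\infty(g)x = R_k(g)x$ whenever $g\in G_k$ and $x\in\mathcal H_k$. Then $R_\infty$ is irreducible; equivalently, every bounded operator $A$ on $\mathcal H_\infty$ commuting with all $R_\infty(g)$, $g\in G_\infty$, is a scalar multiple of the identity. -/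
/-!
Statement 0: If `G_∞ = ⋃ₖ G_k` and `(R_k, 𝓗_k)` are irreducible unitary representations of the
`G_k` linked by injective continuous intertwining embeddings `i_{k+1}^k`, and `R_∞` is the
induced unitary representation of `G_∞` on the Hilbert-space completion `𝓗_∞` of the inductive
limit of the `𝓗_k`, then `R_∞` is irreducible: every bounded operator commuting with all
`R_∞(g)` is a scalar multiple of the identity.
-/

open scoped InnerProductSpace

/-- If `j` intertwines a unitary representation with scalar commutant with a unitary
representation `S`, then every operator `A` commuting with `S` acts on the range of `j`, in the
sense of matrix coefficients, as a scalar. -/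
theorem exists_inner_map_eq_mul_inner_of_commutant_scalar
    {ι H E : Type*} [NormedAddCommGroup H] [InnerProductSpace ℂ H] [CompleteSpace H]
    [NormedAddCommGroup E] [InnerProductSpace ℂ E] [CompleteSpace E]
    (R : ι → H →L[ℂ] H) (S : ι → E →L[ℂ] E) (j : H →L[ℂ] E)
    (hR_unitary : ∀ g x y, ⟪R g x, R g y⟫_ℂ = ⟪x, y⟫_ℂ)
    (hR_surj : ∀ g, Function.Surjective (R g))
    (hR_irred : ∀ B : H →L[ℂ] H, (∀ g, B.comp (R g) = (R g).comp B) →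
      ∃ c : ℂ, B = c • ContinuousLinearMap.id ℂ H)
    (hS_unitary : ∀ g x y, ⟪S g x, S g y⟫_ℂ = ⟪x, y⟫_ℂ)
    (hj : ∀ g x, S g (j x) = j (R g x))
    (A : E →L[ℂ] E) (hA : ∀ g, A.comp (S g) = (S g).comp A) :
    ∃ c : ℂ, ∀ x y, ⟪j x, A (j y)⟫_ℂ = c * ⟪j x, j y⟫_ℂ := by
  have compression_scalar : ∀ B : E →L[ℂ] E, (∀ g, B.comp (S g) = (S g).comp B) →
      ∃ c : ℂ, ∀ x y, ⟪j x, B (j y)⟫_ℂ = c * ⟪x, y⟫_ℂ := by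
    intro B hB
    obtain ⟨c, hc⟩ := hR_irred ((ContinuousLinearMap.adjoint j).comp (B.comp j)) (by
      intro g
      ext y
      refine ext_inner_left ℂ fun x => ?_
      obtain ⟨x, rfl⟩ := hR_surj g x
      have hBg : B (S g (j y)) = S g (B (j y)) := congrArg (· (j y)) (hB g)
      simp only [ContinuousLinearMap.comp_apply, hR_unitary,
        ContinuousLinearMap.adjoint_inner_right]
      rw [← hj, ← hj, hBg, hS_unitary])
    refine ⟨c, fun x y => ?_⟩
    rw [← ContinuousLinearMap.adjoint_inner_right]
    have hy : ContinuousLinearMap.adjoint j (B (j y)) = c • y := congrArg (· y) hc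
    rw [hy, inner_smul_right]
  obtain ⟨c, hc⟩ := compression_scalar A hA
  obtain ⟨d, hd⟩ := compression_scalar (ContinuousLinearMap.id ℂ E) fun _ => rfl
  simp only [ContinuousLinearMap.id_apply] at hd
  by_cases hd0 : d = 0
  · have hj0 : ∀ x, j x = 0 := fun x => by
      rw [← inner_self_eq_zero (𝕜 := ℂ), hd, hd0, zero_mul]
    exact ⟨0, fun x y => by simp [hj0]⟩
  · refine ⟨c / d, fun x y => ?_⟩
    rw [hc, hd]
    field_simp

theorem inductive_limit_irreducible
    {G : Type*} [Group G] (Gc : ℕ → Subgroup G)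
    (hmono : Monotone Gc) (hunion : ∀ g : G, ∃ k, g ∈ Gc k)
    (𝓗 : ℕ → Type*) [∀ k, NormedAddCommGroup (𝓗 k)] [∀ k, InnerProductSpace ℂ (𝓗 k)]
    [∀ k, CompleteSpace (𝓗 k)]
    -- the representations `R_k` of the groups `G_k` on the Hilbert spaces `𝓗_k`
    (R : ∀ k : ℕ, G → 𝓗 k →L[ℂ] 𝓗 k)
    (hR_one : ∀ k, R k 1 = 1)
    (hR_mul : ∀ k, ∀ g ∈ Gc k, ∀ g' ∈ Gc k, R k (g * g') = (R k g).comp (R k g'))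
    (hR_unitary : ∀ k, ∀ g ∈ Gc k, ∀ x y : 𝓗 k, ⟪R k g x, R k g y⟫_ℂ = ⟪x, y⟫_ℂ)
    (hR_surj : ∀ k, ∀ g ∈ Gc k, Function.Surjective (R k g))
    -- each `R_k` is irreducible: its commutant consists of scalars
    (hR_irred : ∀ k, ∀ A : 𝓗 k →L[ℂ] 𝓗 k,
      (∀ g ∈ Gc k, A.comp (R k g) = (R k g).comp A) →
      ∃ c : ℂ, A = c • ContinuousLinearMap.id ℂ (𝓗 k))
    -- the injective continuous linear embeddings `i_{k+1}^k`, intertwining the actions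
    (i : ∀ k : ℕ, 𝓗 k →L[ℂ] 𝓗 (k + 1))
    (hi_inj : ∀ k, Function.Injective (i k))
    (hi_intertwine : ∀ k, ∀ g ∈ Gc k, (i k).comp (R k g) = (R (k + 1) g).comp (i k))
    -- `𝓗_∞`, the Hilbert-space completion of the inductive limit of the `𝓗_k`
    {Einf : Type*} [NormedAddCommGroup Einf] [InnerProductSpace ℂ Einf] [CompleteSpace Einf]
    (j : ∀ k : ℕ, 𝓗 k →L[ℂ] Einf)
    (hj_compat : ∀ k, (j (k + 1)).comp (i k) = j k)
    (hj_inj : ∀ k, Function.Injective (j k))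
    (hj_dense : Dense (⋃ k, Set.range (j k)))
    -- the induced unitary representation `R_∞` of `G_∞` on `𝓗_∞`
    (Rinf : G → Einf →L[ℂ] Einf)
    (hRinf_one : Rinf 1 = 1)
    (hRinf_mul : ∀ g g' : G, Rinf (g * g') = (Rinf g).comp (Rinf g'))
    (hRinf_unitary : ∀ (g : G) (x y : Einf), ⟪Rinf g x, Rinf g y⟫_ℂ = ⟪x, y⟫_ℂ)
    (hRinf_surj : ∀ g : G, Function.Surjective (Rinf g))
    (hRinf_compat : ∀ k, ∀ g ∈ Gc k, ∀ x : 𝓗 k, Rinf g (j k x) = j k (R k g x)) :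
    -- conclusion: `R_∞` is irreducible, i.e. its commutant consists of scalars
    ∀ A : Einf →L[ℂ] Einf, (∀ g : G, A.comp (Rinf g) = (Rinf g).comp A) →
      ∃ c : ℂ, A = c • ContinuousLinearMap.id ℂ Einf := by
  intro A hA
  have hscalar : ∀ k, ∃ c : ℂ, ∀ x y, ⟪j k x, A (j k y)⟫_ℂ = c * ⟪j k x, j k y⟫_ℂ := fun k =>
    exists_inner_map_eq_mul_inner_of_commutant_scalar
      (fun g : Gc k => R k g) (fun g : Gc k => Rinf g) (j k)
      (fun g => hR_unitary k g g.2) (fun g => hR_surj k g g.2)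
      (fun B hB => hR_irred k B fun g hg => hB ⟨g, hg⟩)
      (fun g => hRinf_unitary g) (fun g => hRinf_compat k g g.2) A (fun g => hA g)
  have hrange : Monotone fun k => Set.range (j k) := by
    refine monotone_nat_of_le_succ fun k => ?_
    rintro _ ⟨x, rfl⟩
    exact ⟨i k x, congrArg (· x) (hj_compat k)⟩
  by_cases hzero : ∀ k x, j k x = 0
  · refine ⟨0, ?_⟩
    refine ContinuousLinearMap.ext_on (s := ⋃ k, Set.range (j k))
      (hj_dense.mono Submodule.subset_span) ?_
    intro v hv
    obtain ⟨k, x, rfl⟩ := Set.mem_iUnion.1 hv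
    simp [hzero k x]
  push Not at hzero
  obtain ⟨k₀, x₀, hx₀⟩ := hzero
  obtain ⟨c, hc⟩ := hscalar k₀
  have hcoeff : ∀ v ∈ ⋃ k, Set.range (j k), ∀ w ∈ ⋃ k, Set.range (j k),
      ⟪v, A w⟫_ℂ = c * ⟪v, w⟫_ℂ := by
    intro v hv w hw
    obtain ⟨k, hv⟩ := Set.mem_iUnion.1 hv
    obtain ⟨l, hw⟩ := Set.mem_iUnion.1 hw
    obtain ⟨m, hkm, hlm, h₀m⟩ : ∃ m, k ≤ m ∧ l ≤ m ∧ k₀ ≤ m :=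
      ⟨k + l + k₀, by omega, by omega, by omega⟩
    obtain ⟨x, rfl⟩ := hrange hkm hv
    obtain ⟨y, rfl⟩ := hrange hlm hw
    obtain ⟨z, hz⟩ := hrange h₀m ⟨x₀, rfl⟩
    obtain ⟨d, hd⟩ := hscalar m
    have hdc : d = c := by
      have h := hd z z
      rw [hz, hc] at h
      exact (mul_right_cancel₀ (inner_self_ne_zero.2 hx₀) h).symm
    rw [hd, hdc]
  refine ⟨c, ?_⟩
  refine ContinuousLinearMap.ext_on (s := ⋃ k, Set.range (j k))
    (hj_dense.mono Submodule.subset_span) ?_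
  intro w hw
  refine hj_dense.eq_of_inner_right (𝕜 := ℂ) fun v hv => ?_
  simpa [inner_smul_right] using hcoeff v hv w hw
end

section
/- For polynomial functions $p,q$ on $\mathbb{C}^{n\times k}$, the Gaussian integral inner product equals the Fischer inner product: $\int_{\mathbb{C}^{n\times k}} p(Z)\overline{q(Z)}\,d\mu(Z) \;=\; p(D)\,\overline{q(\bar Z)}\big|_{Z=0}$, where $\mu$ is the Gaussian measure $d\mu(Z)=\pi^{-nk}\exp[-\mathrm{Tr}(ZZ^{\dagger})]\,dZ$ and $p(D)$ denotes the differential operator obtained from $p$ by replacing each variable $Z_{\alpha j}$ by the partial derivative $\partial/\partial Z_{\alpha j}$ ($1\le\alpha\le n$, $1\le j\le k$). -/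
/-!
Statement 4: For polynomials `p, q` on `ℂ^{n×k}`, the Gaussian inner product equals the Fischer
inner product: `∫ p(Z) conj(q(Z)) dμ(Z) = p(D) conj(q(conj Z)) |_{Z=0}`.
-/

open MeasureTheory Matrix
open scoped ComplexConjugate

noncomputable section

/-- The Gaussian measure `dμ(Z) = π^{-nk} exp(-Tr(Z Z†)) dZ` on `ℂ^{n×k}`. -/
def gaussianMeasure (n k : ℕ) : Measure (Fin n → Fin k → ℂ) :=
  volume.withDensity fun Z =>
    ENNReal.ofReal ((Real.pi ^ (n * k))⁻¹ *
      Real.exp (-(Matrix.trace (Matrix.of Z * (Matrix.of Z)ᴴ)).re))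

/-- The constant-coefficient differential operator `p(D)` applied to the polynomial `q`:
each variable of `p` is replaced by the corresponding partial derivative. -/
def polyDop {ι : Type*} [Fintype ι] [DecidableEq ι] (p q : MvPolynomial ι ℂ) :
    MvPolynomial ι ℂ :=
  ∑ r ∈ p.support, p.coeff r •
    Finset.univ.toList.foldr (fun i q' => (⇑(MvPolynomial.pderiv (R := ℂ) i))^[r i] q') q

/-- A coefficient of an iterated partial derivative of a polynomial. -/
theorem coeff_iterate_pderiv {ι R : Type*} [CommSemiring R] (i : ι) (a : ℕ)
    (f : MvPolynomial ι R) (m : ι →₀ ℕ) :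
    ((⇑(MvPolynomial.pderiv (R := R) i))^[a] f).coeff m =
      f.coeff (m + Finsupp.single i a) * ((m i + 1).ascFactorial a : ℕ) := by
  induction a generalizing m with
  | zero => simp
  | succ a ih =>
    rw [Function.iterate_succ_apply', MvPolynomial.coeff_pderiv, ih, add_assoc,
      ← Finsupp.single_add, add_comm 1 a, mul_assoc]
    congr 1
    have h := Nat.succ_ascFactorial (m i + 1) a
    rw [← Nat.ascFactorial_succ] at h
    rw [Finsupp.add_apply, Finsupp.single_eq_same, ← h]
    push_cast
    ring

/-- A coefficient of a composition of iterated partial derivatives in distinct variables, at an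
exponent not involving these variables. -/
theorem coeff_foldr_iterate_pderiv {ι R : Type*} [CommSemiring R] (r : ι → ℕ)
    (f : MvPolynomial ι R) (l : List ι) (hl : l.Nodup) (m : ι →₀ ℕ) (hm : ∀ i ∈ l, m i = 0) :
    (l.foldr (fun i g => (⇑(MvPolynomial.pderiv (R := R) i))^[r i] g) f).coeff m =
      f.coeff (m + (l.map fun i => Finsupp.single i (r i)).sum) *
        ((l.map fun i => (r i).factorial).prod : ℕ) := by
  induction l generalizing m with
  | nil => simp
  | cons i l ih =>
    rw [List.nodup_cons] at hl
    have hm' : ∀ j ∈ l, (m + Finsupp.single i (r i)) j = 0 := by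
      intro j hj
      have hij : j ≠ i := fun h => hl.1 (h ▸ hj)
      simp [hm j (List.mem_cons_of_mem _ hj), hij]
    rw [List.foldr_cons, coeff_iterate_pderiv, ih hl.2 _ hm', hm i List.mem_cons_self, zero_add,
      Nat.one_ascFactorial, List.map_cons, List.map_cons, List.sum_cons, List.prod_cons, add_assoc]
    push_cast
    ring

/-- The Fischer pairing in terms of coefficients. -/
theorem constantCoeff_polyDop {ι : Type*} [Fintype ι] [DecidableEq ι] (p q : MvPolynomial ι ℂ) :
    MvPolynomial.constantCoeff (polyDop p q) =
      ∑ r ∈ p.support, p.coeff r * (q.coeff r * ∏ i, ((r i).factorial : ℂ)) := by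
  rw [polyDop, map_sum]
  refine Finset.sum_congr rfl fun r _ => ?_
  rw [MvPolynomial.constantCoeff_eq, MvPolynomial.coeff_smul, smul_eq_mul,
    coeff_foldr_iterate_pderiv _ _ _ (Finset.nodup_toList _) _ fun _ _ => rfl, zero_add,
    Finset.sum_map_toList, Finset.prod_map_toList, Finsupp.univ_sum_single, Nat.cast_prod]

/-- The density `π⁻¹ exp(-|z|²)` of the standard complex Gaussian, as a complex number. -/
def gaussianWeight (z : ℂ) : ℂ :=
  ((Real.pi⁻¹ * Real.exp (-‖z‖ ^ 2) : ℝ) : ℂ)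

theorem continuous_gaussianWeight : Continuous gaussianWeight := by
  unfold gaussianWeight
  fun_prop

theorem integral_norm_pow_mul_exp (d : ℕ) :
    ∫ z : ℂ, ‖z‖ ^ d * Real.exp (-‖z‖ ^ 2) = Real.pi * Real.Gamma ((d + 2) / 2) := by
  have hd : (-2 : ℝ) < d := by linarith [d.cast_nonneg (α := ℝ)]
  have h := Complex.integral_rpow_mul_exp_neg_rpow one_le_two hd
  rw [mul_div_cancel_left₀ _ two_ne_zero] at h
  exact_mod_cast h

theorem integrable_norm_pow_mul_exp (d : ℕ) :
    Integrable fun z : ℂ => ‖z‖ ^ d * Real.exp (-‖z‖ ^ 2) := by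
  refine not_imp_comm.mp integral_undef ?_
  rw [integral_norm_pow_mul_exp]
  exact (mul_pos Real.pi_pos (Real.Gamma_pos_of_pos (by positivity))).ne'

theorem integrable_pow_mul_conj_pow_mul_gaussianWeight (a b : ℕ) :
    Integrable fun z : ℂ => z ^ a * conj z ^ b * gaussianWeight z := by
  refine ((integrable_norm_pow_mul_exp (a + b)).const_mul Real.pi⁻¹).mono' ?_ ?_
  · have := continuous_gaussianWeight
    exact Continuous.aestronglyMeasurable (by fun_prop)
  · refine .of_forall fun z => le_of_eq ?_
    simp only [gaussianWeight, norm_mul, norm_pow, RCLike.norm_conj, Complex.norm_real,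
      Real.norm_of_nonneg Real.pi_pos.le, norm_inv, Real.norm_of_nonneg (Real.exp_pos _).le]
    ring

/-- The mixed moments of the standard complex Gaussian. -/
theorem integral_pow_mul_conj_pow_mul_gaussianWeight (a b : ℕ) :
    ∫ z : ℂ, z ^ a * conj z ^ b * gaussianWeight z = if a = b then (a.factorial : ℂ) else 0 := by
  split_ifs with h
  · subst h
    have key (z : ℂ) : z ^ a * conj z ^ a * gaussianWeight z =
        ((Real.pi⁻¹ * (‖z‖ ^ (2 * a) * Real.exp (-‖z‖ ^ 2)) : ℝ) : ℂ) := by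
      rw [← mul_pow, Complex.mul_conj', gaussianWeight]
      push_cast
      ring
    simp_rw [key]
    rw [integral_complex_ofReal, integral_const_mul, integral_norm_pow_mul_exp,
      inv_mul_cancel_left₀ Real.pi_ne_zero]
    have ha : (((2 * a : ℕ) : ℝ) + 2) / 2 = a + 1 := by
      push_cast
      ring
    rw [ha, Real.Gamma_nat_eq_factorial, Complex.ofReal_natCast]
  · -- Rotating by the angle `π / (a - b)` changes the sign of the integrand.
    have hab : (a : ℝ) - b ≠ 0 := sub_ne_zero.mpr (Nat.cast_injective.ne h)
    set c : Circle := Circle.exp (Real.pi / (a - b)) with hc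
    have hsign : (c : ℂ) ^ a * conj (c : ℂ) ^ b = -1 := by
      have hab' : (a : ℂ) - b ≠ 0 := by exact_mod_cast hab
      rw [← Circle.coe_inv_eq_conj, hc, ← Circle.exp_neg, Circle.coe_exp, Circle.coe_exp,
        ← Complex.exp_nat_mul, ← Complex.exp_nat_mul, ← Complex.exp_add, ← Complex.exp_pi_mul_I]
      congr 1
      push_cast
      field_simp
      ring
    have hrot := (rotation c).measurePreserving.integral_comp
      (rotation c).toHomeomorph.measurableEmbedding
      (fun z : ℂ => z ^ a * conj z ^ b * gaussianWeight z)
    have key (z : ℂ) : rotation c z ^ a * conj (rotation c z) ^ b * gaussianWeight (rotation c z) =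
        -(z ^ a * conj z ^ b * gaussianWeight z) := by
      have hweight : gaussianWeight (rotation c z) = gaussianWeight z := by
        simp only [gaussianWeight, LinearIsometryEquiv.norm_map]
      rw [hweight, rotation_apply, map_mul, mul_pow, mul_pow]
      linear_combination z ^ a * conj z ^ b * gaussianWeight z * hsign
    simp_rw [key] at hrot
    rw [integral_neg] at hrot
    exact self_eq_neg.mp hrot.symm

theorem integrable_prod_pow_mul_conj_pow_mul_gaussianWeight {ι κ : Type*} [Fintype ι] [Fintype κ]
    (a b : ι → κ → ℕ) :
    Integrable fun Z : ι → κ → ℂ =>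
      ∏ i, ∏ j, Z i j ^ a i j * conj (Z i j) ^ b i j * gaussianWeight (Z i j) :=
  Integrable.fintype_prod
    (f := fun i (z : κ → ℂ) => ∏ j, z j ^ a i j * conj (z j) ^ b i j * gaussianWeight (z j))
    fun i => Integrable.fintype_prod
      (f := fun j (z : ℂ) => z ^ a i j * conj z ^ b i j * gaussianWeight z)
      fun _ => integrable_pow_mul_conj_pow_mul_gaussianWeight _ _

theorem integral_prod_pow_mul_conj_pow_mul_gaussianWeight {ι κ : Type*} [Fintype ι] [Fintype κ]
    (a b : ι → κ → ℕ) :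
    ∫ Z : ι → κ → ℂ, ∏ i, ∏ j, Z i j ^ a i j * conj (Z i j) ^ b i j * gaussianWeight (Z i j) =
      ∏ i, ∏ j, if a i j = b i j then ((a i j).factorial : ℂ) else 0 := by
  rw [integral_fintype_prod_volume_eq_prod
    (fun i (z : κ → ℂ) => ∏ j, z j ^ a i j * conj (z j) ^ b i j * gaussianWeight (z j))]
  refine Finset.prod_congr rfl fun i _ => ?_
  rw [integral_fintype_prod_volume_eq_prod
    (fun j (z : ℂ) => z ^ a i j * conj z ^ b i j * gaussianWeight z)]
  simp_rw [integral_pow_mul_conj_pow_mul_gaussianWeight]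

theorem re_trace_mul_conjTranspose {ι κ : Type*} [Fintype ι] [Fintype κ] (Z : Matrix ι κ ℂ) :
    (Matrix.trace (Z * Zᴴ)).re = ∑ i, ∑ j, ‖Z i j‖ ^ 2 := by
  simp only [Matrix.trace, Matrix.diag_apply, Matrix.mul_apply, Matrix.conjTranspose_apply,
    Complex.re_sum, RCLike.star_def, Complex.mul_conj']
  norm_cast

/-- Integration against the Gaussian measure as a Lebesgue integral with product weight. -/
theorem integral_gaussianMeasure (n k : ℕ) (f : (Fin n → Fin k → ℂ) → ℂ) :
    ∫ Z, f Z ∂gaussianMeasure n k = ∫ Z, f Z * ∏ i, ∏ j, gaussianWeight (Z i j) := by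
  rw [gaussianMeasure]
  simp_rw [re_trace_mul_conjTranspose, Matrix.of_apply]
  rw [integral_withDensity_eq_integral_toReal_smul
    (by fun_prop) (.of_forall fun _ => ENNReal.ofReal_lt_top)]
  refine integral_congr_ae (.of_forall fun Z => ?_)
  have hweight : (Real.pi ^ (n * k))⁻¹ * Real.exp (-∑ i, ∑ j, ‖Z i j‖ ^ 2) =
      ∏ i, ∏ j, Real.pi⁻¹ * Real.exp (-‖Z i j‖ ^ 2) := by
    simp [Finset.prod_mul_distrib, ← Real.exp_sum, pow_mul', Finset.sum_neg_distrib]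
  simp only [gaussianWeight]
  rw [ENNReal.toReal_ofReal (by positivity), hweight, Complex.real_smul, mul_comm]
  push_cast
  rfl

theorem gaussian_inner_product_eq_fischer (n k : ℕ)
    (p q : MvPolynomial (Fin n × Fin k) ℂ) :
    ∫ Z, MvPolynomial.eval (fun v => Z v.1 v.2) p *
        conj (MvPolynomial.eval (fun v => Z v.1 v.2) q) ∂gaussianMeasure n k =
      MvPolynomial.constantCoeff (polyDop p (MvPolynomial.map (starRingEnd ℂ) q)) := by
  simp_rw [integral_gaussianMeasure, MvPolynomial.eval_eq', map_sum, map_mul, Finset.sum_mul_sum,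
    Finset.sum_mul]
  have expand (r s : Fin n × Fin k →₀ ℕ) (Z : Fin n → Fin k → ℂ) :
      p.coeff r * (∏ v, Z v.1 v.2 ^ r v) * (conj (q.coeff s) * conj (∏ v, Z v.1 v.2 ^ s v)) *
          ∏ i, ∏ j, gaussianWeight (Z i j) =
        p.coeff r * conj (q.coeff s) *
          ∏ i, ∏ j, Z i j ^ r (i, j) * conj (Z i j) ^ s (i, j) * gaussianWeight (Z i j) := by
    simp only [Fintype.prod_prod_type, map_prod, map_pow, Finset.prod_mul_distrib]
    ring
  simp_rw [expand]
  have integrable (r s : Fin n × Fin k →₀ ℕ) := (integrable_prod_pow_mul_conj_pow_mul_gaussianWeight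
    (fun i j => r (i, j)) (fun i j => s (i, j))).const_mul (p.coeff r * conj (q.coeff s))
  rw [integral_finsetSum _ fun r _ => integrable_finsetSum _ fun s _ => integrable r s,
    constantCoeff_polyDop]
  refine Finset.sum_congr rfl fun r _ => ?_
  rw [integral_finsetSum _ fun s _ => integrable r s]
  simp_rw [integral_const_mul, integral_prod_pow_mul_conj_pow_mul_gaussianWeight]
  rw [Finset.sum_eq_single r]
  · simp [Fintype.prod_prod_type, MvPolynomial.coeff_map, mul_assoc]
  · intro s _ hsr
    obtain ⟨⟨i, j⟩, hij⟩ : ∃ v, s v ≠ r v := by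
      contrapose! hsr
      exact Finsupp.ext hsr
    rw [Finset.prod_eq_zero (Finset.mem_univ i) (Finset.prod_eq_zero (Finset.mem_univ j)
      (if_neg hij.symm)), mul_zero]
  · intro hr
    simp [MvPolynomial.notMem_support_iff.mp hr]


end
end

section
/- Let $k\ge 1$, let $p_0(Z)=\sum_{i=1}^k Z_i^2$, and let $h\ne 0$ be a harmonic homogeneous polynomial of degree $r$ in $Z_1,\dots,Z_k$. Let $Jh$ be the linear span of $\{p_0^j h : j=0,1,2,\dots\}$, and let $X^{+}=\tfrac12 p_0$ (multiplication) and $X^{-}=\tfrac12\sum_i\partial^2/\partial Z_i^2$. Then the polynomials $p_0^j h$, $j\ge 0$, are linearly independent, $Jh$ is invariant under $X^{+}$ and $X^{-}$, and $Jh$ is irreducible under these operators: the only subspaces of $Jh$ invariant under both $X^{+}$ and $X^{-}$ are $\{0\}$ and $Jh$ itself. -/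
/-!
Statement 13: For `h ≠ 0` harmonic homogeneous of degree `r` in `Z₁,…,Z_k` (`k ≥ 1`), the
polynomials `p₀ʲ h` are linearly independent, their span `Jh` is invariant under
`X⁺ = ½ p₀` and `X⁻ = ½ Δ`, and `Jh` is irreducible under these operators.
-/

noncomputable section

/-- The polynomial `p₀(Z) = ∑ i, Z i ^ 2`. -/
def p0 (k : ℕ) : MvPolynomial (Fin k) ℂ :=
  ∑ i : Fin k, MvPolynomial.X i ^ 2

/-- The Laplacian `Δ = ∑ i, ∂²/∂Z i²`. -/
def lap (k : ℕ) (p : MvPolynomial (Fin k) ℂ) : MvPolynomial (Fin k) ℂ :=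
  ∑ i : Fin k, MvPolynomial.pderiv i (MvPolynomial.pderiv i p)

/-- The raising operator `X⁺ = ½ p₀` (multiplication). -/
def Xplus (k : ℕ) (p : MvPolynomial (Fin k) ℂ) : MvPolynomial (Fin k) ℂ :=
  ((1 : ℂ) / 2) • (p0 k * p)

/-- The lowering operator `X⁻ = ½ Δ`. -/
def Xminus (k : ℕ) (p : MvPolynomial (Fin k) ℂ) : MvPolynomial (Fin k) ℂ :=
  ((1 : ℂ) / 2) • lap k p

/-- `Jh`, the span of `{p₀ʲ h : j = 0, 1, 2, …}`. -/
def Jspan (k : ℕ) (h : MvPolynomial (Fin k) ℂ) : Submodule ℂ (MvPolynomial (Fin k) ℂ) :=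
  Submodule.span ℂ (Set.range fun j : ℕ => p0 k ^ j * h)

section LoweringOperator

variable {K M : Type*} [Field K] [AddCommGroup M] [Module K M]
  {L : Module.End K M} {v : ℕ → M} {c : ℕ → K}

/-- Iterating a lowering operator `n` times sends the `n`-th vector to a nonzero multiple of the
lowest one. -/
theorem exists_pow_lowering_apply_self (hc : ∀ j, c j ≠ 0)
    (hL : ∀ j, L (v (j + 1)) = c j • v j) (n : ℕ) : ∃ a : K, a ≠ 0 ∧ (L ^ n) (v n) = a • v 0 := by
  induction n with
  | zero => exact ⟨1, one_ne_zero, by simp⟩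
  | succ n ih =>
    obtain ⟨a, ha, h⟩ := ih
    exact ⟨c n * a, mul_ne_zero (hc n) ha, by
      rw [pow_succ, Module.End.mul_apply, hL, map_smul, h, smul_smul]⟩

/-- Iterating a lowering operator `n` times annihilates every vector below the `n`-th. -/
theorem pow_lowering_apply_of_lt (hL0 : L (v 0) = 0) (hL : ∀ j, L (v (j + 1)) = c j • v j)
    {n j : ℕ} (hj : j < n) : (L ^ n) (v j) = 0 := by
  induction n generalizing j with
  | zero => omega
  | succ n ih =>
    rw [pow_succ, Module.End.mul_apply]
    cases j with
    | zero => rw [hL0, map_zero]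
    | succ j => rw [hL, map_smul, ih (by omega), smul_zero]

/-- Some power of a lowering operator sends a nontrivial combination of the vectors to a nonzero
multiple of the lowest one. -/
theorem exists_pow_lowering_linearCombination (hc : ∀ j, c j ≠ 0) (hL0 : L (v 0) = 0)
    (hL : ∀ j, L (v (j + 1)) = c j • v j) {l : ℕ →₀ K} (hl : l ≠ 0) :
    ∃ (n : ℕ) (a : K), a ≠ 0 ∧ (L ^ n) (Finsupp.linearCombination K v l) = a • v 0 := by
  have hs : l.support.Nonempty := Finsupp.support_nonempty_iff.mpr hl
  set n := l.support.max' hs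
  obtain ⟨a, ha, h⟩ := exists_pow_lowering_apply_self hc hL n
  have hmem : n ∈ l.support := l.support.max'_mem hs
  refine ⟨n, l n * a, mul_ne_zero (Finsupp.mem_support_iff.mp hmem) ha, ?_⟩
  rw [Finsupp.linearCombination_apply, Finsupp.sum, map_sum, Finset.sum_eq_single_of_mem n hmem,
    map_smul, h, smul_smul]
  intro j hj hjn
  have hjle : j ≤ n := l.support.le_max' j hj
  rw [map_smul, pow_lowering_apply_of_lt hL0 hL (lt_of_le_of_ne hjle hjn), smul_zero]

theorem linearIndependent_of_lowering (hc : ∀ j, c j ≠ 0) (hv : v 0 ≠ 0) (hL0 : L (v 0) = 0)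
    (hL : ∀ j, L (v (j + 1)) = c j • v j) : LinearIndependent K v := by
  rw [linearIndependent_iff]
  intro l hl0
  by_contra hl
  obtain ⟨n, a, ha, h⟩ := exists_pow_lowering_linearCombination hc hL0 hL hl
  rw [hl0, map_zero] at h
  exact smul_ne_zero ha hv h.symm

/-- A nonzero subspace of the span that is stable under the lowering operator contains the lowest
vector. -/
theorem lowest_mem_of_lowering (hc : ∀ j, c j ≠ 0) (hL0 : L (v 0) = 0)
    (hL : ∀ j, L (v (j + 1)) = c j • v j) {S : Submodule K M}
    (hS : S ≤ Submodule.span K (Set.range v)) (hS0 : S ≠ ⊥) (hLS : ∀ x ∈ S, L x ∈ S) :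
    v 0 ∈ S := by
  obtain ⟨x, hx, hx0⟩ := S.exists_mem_ne_zero_of_ne_bot hS0
  obtain ⟨l, rfl⟩ := Finsupp.mem_span_range_iff_exists_finsupp.mp (hS hx)
  change Finsupp.linearCombination K v l ∈ S at hx
  change Finsupp.linearCombination K v l ≠ 0 at hx0
  have hl : l ≠ 0 := by
    rintro rfl
    exact hx0 (map_zero _)
  obtain ⟨n, a, ha, h⟩ := exists_pow_lowering_linearCombination hc hL0 hL hl
  have hpow : (L ^ n) (Finsupp.linearCombination K v l) ∈ S :=
    Module.End.pow_apply_mem_of_forall_mem n hLS _ hx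
  rw [h] at hpow
  exact (S.smul_mem_iff ha).mp hpow

end LoweringOperator

section Laplacian

open MvPolynomial

variable {k r : ℕ}

/-- The Laplacian as a linear map. -/
def lapLinear (k : ℕ) : Module.End ℂ (MvPolynomial (Fin k) ℂ) :=
  ∑ i : Fin k, (pderiv i).toLinearMap ∘ₗ (pderiv i).toLinearMap

theorem lapLinear_apply (p : MvPolynomial (Fin k) ℂ) : lapLinear k p = lap k p := by
  simp [lapLinear, lap]

theorem p0_isHomogeneous (k : ℕ) : (p0 k).IsHomogeneous 2 :=
  IsHomogeneous.sum _ _ _ fun i _ => isHomogeneous_X_pow i 2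

theorem pderiv_p0 (i : Fin k) : pderiv i (p0 k) = 2 * X i := by
  rw [p0, map_sum, Finset.sum_eq_single_of_mem i (Finset.mem_univ i)]
  · simp
  · intro j _ hj
    simp [pderiv_X_of_ne hj]

theorem lap_p0_mul {f : MvPolynomial (Fin k) ℂ} (hf : f.IsHomogeneous r) :
    lap k (p0 k * f) = (2 * k + 4 * r : ℂ) • f + p0 k * lap k f := by
  have hterm (i : Fin k) : pderiv i (pderiv i (p0 k * f)) =
      2 * f + 4 * (X i * pderiv i f) + p0 k * pderiv i (pderiv i f) := by
    have h2 : pderiv i (2 : MvPolynomial (Fin k) ℂ) = 0 := (pderiv i).map_natCast 2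
    simp only [pderiv_mul, pderiv_p0, map_add, pderiv_X_self, h2]
    ring
  simp only [lap, hterm, Finset.sum_add_distrib, ← Finset.mul_sum, hf.sum_X_mul_pderiv]
  simp only [Finset.sum_const, Finset.card_univ, Fintype.card_fin, nsmul_eq_mul, smul_eq_C_mul,
    map_add, map_mul, map_natCast, map_ofNat]
  ring

theorem lap_p0_pow_succ_mul {h : MvPolynomial (Fin k) ℂ} (hhom : h.IsHomogeneous r)
    (hharm : lap k h = 0) (j : ℕ) :
    lap k (p0 k ^ (j + 1) * h) = (2 * (j + 1) * (k + 2 * r + 2 * j) : ℂ) • (p0 k ^ j * h) := by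
  have hdeg (j : ℕ) : (p0 k ^ j * h).IsHomogeneous (2 * j + r) :=
    ((p0_isHomogeneous k).pow j).mul hhom
  induction j with
  | zero =>
    rw [zero_add, pow_one, lap_p0_mul hhom, hharm, mul_zero, add_zero, pow_zero, one_mul]
    congr 1
    push_cast
    ring
  | succ j ih =>
    rw [pow_succ' _ (j + 1), mul_assoc, lap_p0_mul (hdeg (j + 1)), ih, mul_smul_comm, ← mul_assoc,
      ← pow_succ', ← add_smul]
    congr 1
    push_cast
    ring

end Laplacian

theorem Jh_irreducible (k r : ℕ) (hk : 0 < k) (h : MvPolynomial (Fin k) ℂ)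
    (hne : h ≠ 0) (hhom : h.IsHomogeneous r) (hharm : lap k h = 0) :
    LinearIndependent ℂ (fun j : ℕ => p0 k ^ j * h) ∧
    (∀ p ∈ Jspan k h, Xplus k p ∈ Jspan k h ∧ Xminus k p ∈ Jspan k h) ∧
    (∀ S : Submodule ℂ (MvPolynomial (Fin k) ℂ), S ≤ Jspan k h →
      (∀ p ∈ S, Xplus k p ∈ S) → (∀ p ∈ S, Xminus k p ∈ S) →
      S = ⊥ ∨ S = Jspan k h) := by
  set v : ℕ → MvPolynomial (Fin k) ℂ := fun j => p0 k ^ j * h with hv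
  have hc (j : ℕ) : (2 * (j + 1) * (k + 2 * r + 2 * j) : ℂ) ≠ 0 := by
    have : 2 * (j + 1) * (k + 2 * r + 2 * j) ≠ 0 := by positivity
    exact_mod_cast this
  have hv0 : v 0 = h := by simp [hv]
  have hL0 : lapLinear k (v 0) = 0 := by rw [lapLinear_apply, hv0, hharm]
  have hL (j : ℕ) : lapLinear k (v (j + 1)) = (2 * (j + 1) * (k + 2 * r + 2 * j) : ℂ) • v j := by
    rw [lapLinear_apply, hv]
    exact lap_p0_pow_succ_mul hhom hharm j
  have hp0 (j : ℕ) : p0 k * v j = v (j + 1) := by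
    simp only [hv, pow_succ', mul_assoc]
  have hmem (j : ℕ) : v j ∈ Jspan k h := Submodule.subset_span ⟨j, rfl⟩
  refine ⟨linearIndependent_of_lowering hc (hv0 ▸ hne) hL0 hL, fun p hp => ⟨?_, ?_⟩, ?_⟩
  · have hle : Jspan k h ≤ (Jspan k h).comap (LinearMap.mulLeft ℂ (p0 k)) := by
      refine Submodule.span_le.mpr ?_
      rintro _ ⟨j, rfl⟩
      change p0 k * v j ∈ Jspan k h
      exact hp0 j ▸ hmem (j + 1)
    exact Submodule.smul_mem _ _ (hle hp)
  · have hle : Jspan k h ≤ (Jspan k h).comap (lapLinear k) := by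
      refine Submodule.span_le.mpr ?_
      rintro _ ⟨j, rfl⟩
      change lapLinear k (v j) ∈ Jspan k h
      cases j with
      | zero => exact hL0 ▸ Submodule.zero_mem _
      | succ j => exact hL j ▸ Submodule.smul_mem _ _ (hmem j)
    exact Submodule.smul_mem _ _ (lapLinear_apply p ▸ hle hp)
  · intro S hS hplus hminus
    have half_ne : (1 / 2 : ℂ) ≠ 0 := by norm_num
    refine or_iff_not_imp_left.mpr fun hS0 => le_antisymm hS (Submodule.span_le.mpr ?_)
    have hmin (p) (hp : p ∈ S) : lapLinear k p ∈ S := by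
      rw [lapLinear_apply]
      exact (S.smul_mem_iff half_ne).mp (hminus p hp)
    rintro _ ⟨j, rfl⟩
    change v j ∈ S
    induction j with
    | zero => exact lowest_mem_of_lowering hc hL0 hL hS hS0 hmin
    | succ j ih => exact hp0 j ▸ (S.smul_mem_iff half_ne).mp (hplus _ ih)

end
end

section
/- Call a polynomial $p$ on $\mathbb{C}^{n\times k}$ $H$-harmonic if $\triangle_{\alpha\beta}p=0$ for all $1\le\alpha,\beta\le n$, where $\triangle_{\alpha\beta}=\sum_{i=1}^k\partial^2/\partial Z_{\alpha i}\partial Z_{\beta i}$. Let $E_{\alpha\beta}=\sum_{i=1}^k Z_{\alpha i}\,\partial/\partial Z_{\beta i}+\tfrac12 k\,\delta_{\alpha\beta}$. Then for every $H$-harmonic polynomial $p$ and all $\alpha,\beta\in\{1,\dots,n\}$, the polynomial $E_{\alpha\beta}\,p$ is again $H$-harmonic; i.e., the operators $E_{\alpha\beta}$ preserve the space of $H$-harmonic polynomials on $\mathbb{C}^{n\times k}$. -/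
/-!
Statement 17: The operators `E_{αβ} = ∑ i, Z_{αi} ∂/∂Z_{βi} + ½ k δ_{αβ}` preserve the space of
`H`-harmonic polynomials on `ℂ^{n×k}` (those annihilated by all Laplacians
`Δ_{αβ} = ∑ i, ∂²/∂Z_{αi}∂Z_{βi}`).
-/

noncomputable section

/-- The partial derivative `∂/∂Z v` as an endomorphism of polynomials on `ℂ^{n×k}`. -/
def pd (n k : ℕ) (v : Fin n × Fin k) : Module.End ℂ (MvPolynomial (Fin n × Fin k) ℂ) :=
  (MvPolynomial.pderiv v).toLinearMap

/-- `E_{αβ} = ∑ i, Z_{αi} ∂/∂Z_{βi} + ½ k δ_{αβ}`. -/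
def Eop (n k : ℕ) (α β : Fin n) : Module.End ℂ (MvPolynomial (Fin n × Fin k) ℂ) :=
  (∑ i : Fin k, LinearMap.mulLeft ℂ (MvPolynomial.X (α, i)) * pd n k (β, i)) +
    (if α = β then (k : ℂ) / 2 else 0) • (1 : Module.End ℂ (MvPolynomial (Fin n × Fin k) ℂ))

/-- The Laplacian `Δ_{αβ} = ∑ i, ∂²/∂Z_{αi}∂Z_{βi}`. -/
def Dop (n k : ℕ) (α β : Fin n) : Module.End ℂ (MvPolynomial (Fin n × Fin k) ℂ) :=
  ∑ i : Fin k, pd n k (α, i) * pd n k (β, i)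

/-- Partial derivatives commute. -/
lemma pd_comm (n k : ℕ) (v w : Fin n × Fin k) (q : MvPolynomial (Fin n × Fin k) ℂ) :
    pd n k v (pd n k w q) = pd n k w (pd n k v q) := by
  have h : ⁅MvPolynomial.pderiv (R := ℂ) v, MvPolynomial.pderiv (R := ℂ) w⁆ = 0 := by
    refine MvPolynomial.derivation_ext fun u => ?_
    simp [Derivation.commutator_apply, MvPolynomial.pderiv_X, Pi.single_apply, apply_ite]
  have h' := DFunLike.congr_fun h q
  rw [Derivation.commutator_apply, Derivation.zero_apply, sub_eq_zero] at h'
  exact h'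

/-- The Leibniz rule for a partial derivative of a coordinate times a polynomial. -/
lemma pd_X_mul (n k : ℕ) (v w : Fin n × Fin k) (q : MvPolynomial (Fin n × Fin k) ℂ) :
    pd n k v (MvPolynomial.X w * q) =
      MvPolynomial.X w * pd n k v q + if w = v then q else 0 := by
  simp [pd, MvPolynomial.pderiv_X, Pi.single_apply, eq_comm]

lemma Dop_apply (n k : ℕ) (γ δ : Fin n) (q : MvPolynomial (Fin n × Fin k) ℂ) :
    Dop n k γ δ q = ∑ j, pd n k (γ, j) (pd n k (δ, j) q) := by
  simp [Dop]

/-- Laplacians commute with partial derivatives. -/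
lemma Dop_pd (n k : ℕ) (γ δ : Fin n) (v : Fin n × Fin k)
    (q : MvPolynomial (Fin n × Fin k) ℂ) :
    Dop n k γ δ (pd n k v q) = pd n k v (Dop n k γ δ q) := by
  simp only [Dop_apply, map_sum]
  refine Finset.sum_congr rfl fun j _ => ?_
  rw [pd_comm n k (δ, j), pd_comm n k (γ, j)]

/-- The commutator of a Laplacian with multiplication by a coordinate. -/
lemma Dop_X_mul (n k : ℕ) (γ δ α : Fin n) (i : Fin k)
    (q : MvPolynomial (Fin n × Fin k) ℂ) :
    Dop n k γ δ (MvPolynomial.X (α, i) * q) =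
      MvPolynomial.X (α, i) * Dop n k γ δ q +
        ((if α = γ then pd n k (δ, i) q else 0) + if α = δ then pd n k (γ, i) q else 0) := by
  simp only [Dop_apply, pd_X_mul, map_add, apply_ite (pd n k _), map_zero,
    Finset.sum_add_distrib, Finset.mul_sum, Prod.mk.injEq, ite_and, add_assoc]
  congr 2 <;> split_ifs <;> simp

/-- The commutation relation
`Δ_{γδ} E_{αβ} = E_{αβ} Δ_{γδ} + δ_{αγ} Δ_{δβ} + δ_{αδ} Δ_{γβ}`. -/
lemma Dop_Eop (n k : ℕ) (α β γ δ : Fin n) (q : MvPolynomial (Fin n × Fin k) ℂ) :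
    Dop n k γ δ (Eop n k α β q) =
      Eop n k α β (Dop n k γ δ q) +
        ((if α = γ then Dop n k δ β q else 0) + if α = δ then Dop n k γ β q else 0) := by
  simp only [Eop, LinearMap.add_apply, LinearMap.sum_apply, Module.End.mul_apply,
    LinearMap.mulLeft_apply, LinearMap.smul_apply, Module.End.one_apply, map_add, map_sum,
    map_smul, Dop_X_mul, Dop_pd, Finset.sum_add_distrib]
  rw [add_right_comm]
  congr 2 <;> split_ifs <;> simp [Dop_apply]

theorem Eop_preserves_harmonics (n k : ℕ) (p : MvPolynomial (Fin n × Fin k) ℂ)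
    (hp : ∀ α β : Fin n, Dop n k α β p = 0) :
    ∀ α β γ δ : Fin n, Dop n k γ δ (Eop n k α β p) = 0 := by
  intro α β γ δ
  simp [Dop_Eop, hp]

end
end
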